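/- Let Σ = σ² × Σ_1 ⊗ ⋯ ⊗ Σ_v with Σ_j of size n_j × n_j, and for 2 ≤ h ≤ v define Σ^{(h)} := K_{n_h⋯n_v, n_1⋯n_{h-1}} Σ K_{n_1⋯n_{h-1}, n_h⋯n_v}, where K_{m,p} denotes the mp × mp commutation matrix (the unique matrix satisfying K_{m,p} vec(A) = vec(Aᵀ) for every m × p matrix A). Then Σ^{(h)} = σ² × Σ_h ⊗ Σ_{h+1} ⊗ ⋯ ⊗ Σ_v ⊗ Σ_1 ⊗ ⋯ ⊗ Σ_{h-1} = σ² × Σ_h ⊗ Σ_{-h}, and consequently, with d^{(h)} := PTR_{n_h}(Σ^{(h)}) = σ² tr(Σ_{-h}) Σ_h, one has Σ_h = d^{(h)} / (tr(d^{(h)})/n_h), i.e., every factor Σ_h is identified from Σ. -/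

import Mathlib

/-!
The commutation matrix `K_{m,p}` is the permutation matrix of the swap of index pairs, so
multiplying `A ⊗ B` by commutation matrices on both sides exchanges its two factors. Applied to
`A ⊗ (Σ_h ⊗ Q)` this brings `Σ_h` to the front, where the partial trace turns it into a nonzero
multiple of itself; the normalization `tr Σ_h = n_h` determines that multiple.
-/

open Matrix
open Kronecker

/-- The partial trace operator `PTR_m : ℝ^{mp×mp} → ℝ^{m×m}`: viewing a matrix
indexed by `m × p` as an `m × m` array of `p × p` blocks, it returns the matrix
of block traces. -/
noncomputable def PTR {m p : Type*} [Fintype p]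
    (A : Matrix (m × p) (m × p) ℝ) : Matrix m m ℝ :=
  fun i j => ∑ ℓ : p, A (i, ℓ) (j, ℓ)

/-- `K` is the commutation matrix `K_{m,p}`: the (unique) `mp × mp` matrix
with `K ⬝ vec M = vec Mᵀ` for every `m × p` matrix `M`, where `vec` stacks the
columns of a matrix (so `vec M` is indexed by pairs (column, row)). -/
def IsCommutationMatrix {m p : Type*} [Fintype m] [Fintype p]
    (K : Matrix (m × p) (p × m) ℝ) : Prop :=
  ∀ M : Matrix m p ℝ, K.mulVec (fun y => M y.2 y.1) = fun x => M x.1 x.2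

theorem kronecker_submatrix_swap {l m n p R : Type*} [CommMagma R]
    (A : Matrix l m R) (B : Matrix n p R) :
    (A ⊗ₖ B).submatrix Prod.swap Prod.swap = B ⊗ₖ A := by
  ext ⟨i, k⟩ ⟨j, l⟩
  exact mul_comm (A k l) (B i j)

namespace IsCommutationMatrix

variable {m p m' p' : Type*} [Fintype m] [Fintype p] [Fintype m'] [Fintype p']

theorem eq_toMatrix_prodComm [DecidableEq m] [DecidableEq p] {K : Matrix (m × p) (p × m) ℝ}
    (hK : IsCommutationMatrix K) : K = (Equiv.prodComm m p).toPEquiv.toMatrix := by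
  refine ext_iff_mulVec.2 fun v ↦ ?_
  rw [PEquiv.toMatrix_toPEquiv_mulVec]
  exact hK (of fun i j ↦ v (j, i))

theorem mul_kronecker_mul {K : Matrix (m × p) (p × m) ℝ} {L : Matrix (p' × m') (m' × p') ℝ}
    (hK : IsCommutationMatrix K) (hL : IsCommutationMatrix L)
    (A : Matrix p p' ℝ) (B : Matrix m m' ℝ) : K * (A ⊗ₖ B) * L = B ⊗ₖ A := by
  classical
  rw [hK.eq_toMatrix_prodComm, hL.eq_toMatrix_prodComm, PEquiv.toMatrix_toPEquiv_mul,
    PEquiv.mul_toMatrix_toPEquiv, submatrix_submatrix]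
  exact kronecker_submatrix_swap A B

end IsCommutationMatrix

theorem PTR_smul {m p : Type*} [Fintype p] (s : ℝ) (M : Matrix (m × p) (m × p) ℝ) :
    PTR (s • M) = s • PTR M := by
  ext i j
  exact (Finset.mul_sum _ _ s).symm

theorem PTR_kronecker {m p : Type*} [Fintype p] (S : Matrix m m ℝ) (B : Matrix p p ℝ) :
    PTR (S ⊗ₖ B) = B.trace • S := by
  ext i j
  calc ∑ k, S i j * B k k = S i j * B.trace := (Finset.mul_sum _ _ _).symm
    _ = B.trace * S i j := mul_comm _ _

theorem inv_trace_smul_div_trace_smul_smul {n F : Type*} [Fintype n] [Field F] {s : F} (hs : s ≠ 0)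
    {S : Matrix n n F} (hS : S.trace ≠ 0) : ((s • S).trace / S.trace)⁻¹ • (s • S) = S := by
  rw [trace_smul, smul_eq_mul, mul_div_cancel_right₀ s hS, inv_smul_smul₀ hs]

theorem commutation_conjugation_and_identification_general
    {m p q : Type*} [Fintype m] [Fintype p] [Fintype q] {s : ℝ} (hs : s ≠ 0)
    {A : Matrix p p ℝ} {S : Matrix m m ℝ} {Q : Matrix q q ℝ}
    (hA : A.trace ≠ 0) (hS : S.trace ≠ 0) (hQ : Q.trace ≠ 0)
    {K : Matrix ((m × q) × p) (p × (m × q)) ℝ} {L : Matrix (p × (m × q)) ((m × q) × p) ℝ}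
    (hK : IsCommutationMatrix K) (hL : IsCommutationMatrix L) :
    reindex (Equiv.prodAssoc m q p) (Equiv.prodAssoc m q p) (K * (s • (A ⊗ₖ (S ⊗ₖ Q))) * L)
      = s • (S ⊗ₖ (Q ⊗ₖ A)) ∧
    PTR (s • (S ⊗ₖ (Q ⊗ₖ A))) = (s * (Q ⊗ₖ A).trace) • S ∧
    S = ((PTR (s • (S ⊗ₖ (Q ⊗ₖ A)))).trace / S.trace)⁻¹ • PTR (s • (S ⊗ₖ (Q ⊗ₖ A))) := by
  have hconj : reindex (Equiv.prodAssoc m q p) (Equiv.prodAssoc m q p)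
      (K * (s • (A ⊗ₖ (S ⊗ₖ Q))) * L) = s • (S ⊗ₖ (Q ⊗ₖ A)) := by
    rw [Matrix.mul_smul, Matrix.smul_mul, hK.mul_kronecker_mul hL, ← kronecker_assoc, reindex_apply,
      reindex_apply, submatrix_smul, Pi.smul_apply, Pi.smul_apply]
  have hPTR : PTR (s • (S ⊗ₖ (Q ⊗ₖ A))) = (s * (Q ⊗ₖ A).trace) • S := by
    rw [PTR_smul, PTR_kronecker, smul_smul]
  have hscale : s * (Q ⊗ₖ A).trace ≠ 0 := by
    rw [trace_kronecker]
    exact mul_ne_zero hs (mul_ne_zero hQ hA)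
  refine ⟨hconj, hPTR, ?_⟩
  rw [hPTR, inv_trace_smul_div_trace_smul_smul hscale hS]

/-- Write `Σ = σ² • (A ⊗ (Σ_h ⊗ Q))` where `A` collects the
Kronecker factors before position `h` (size `a`) and `Q` those after it
(size `c`), and let `Σ^{(h)} := K_{n_h c, a} Σ K_{a, n_h c}` with the
commutation matrices.  Then, after reassociating the Kronecker indices,
`Σ^{(h)} = σ² • (Σ_h ⊗ (Q ⊗ A)) = σ² • (Σ_h ⊗ Σ₋h)`; consequently, with
`d⁽ʰ⁾ := PTR_{n_h}(Σ^{(h)}) = σ² tr(Σ₋h) • Σ_h`, one has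
`Σ_h = d⁽ʰ⁾ / (tr d⁽ʰ⁾ / n_h)`, i.e. every factor `Σ_h` is identified from
`Σ`. -/
theorem commutation_conjugation_and_identification
    (a nh c : ℕ) (ha : 0 < a) (hnh : 0 < nh) (hc : 0 < c) (σ2 : ℝ) (hσ2 : 0 < σ2)
    (A : Matrix (Fin a) (Fin a) ℝ)
    (Sigh : Matrix (Fin nh) (Fin nh) ℝ)
    (Q : Matrix (Fin c) (Fin c) ℝ)
    (htrA : A.trace = (a : ℝ)) (htrSigh : Sigh.trace = (nh : ℝ))
    (htrQ : Q.trace = (c : ℝ))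
    (Kba : Matrix ((Fin nh × Fin c) × Fin a) (Fin a × (Fin nh × Fin c)) ℝ)
    (Kab : Matrix (Fin a × (Fin nh × Fin c)) ((Fin nh × Fin c) × Fin a) ℝ)
    (hKba : IsCommutationMatrix Kba) (hKab : IsCommutationMatrix Kab) :
    Matrix.reindex (Equiv.prodAssoc (Fin nh) (Fin c) (Fin a))
        (Equiv.prodAssoc (Fin nh) (Fin c) (Fin a))
        (Kba * (σ2 • (A ⊗ₖ (Sigh ⊗ₖ Q))) * Kab)
      = σ2 • (Sigh ⊗ₖ (Q ⊗ₖ A)) ∧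
    PTR (σ2 • (Sigh ⊗ₖ (Q ⊗ₖ A))) = (σ2 * (Q ⊗ₖ A).trace) • Sigh ∧
    Sigh = ((PTR (σ2 • (Sigh ⊗ₖ (Q ⊗ₖ A)))).trace / (nh : ℝ))⁻¹ •
        PTR (σ2 • (Sigh ⊗ₖ (Q ⊗ₖ A))) := by
  have htr_ne {k : ℕ} (hk : 0 < k) {M : Matrix (Fin k) (Fin k) ℝ} (hM : M.trace = k) :
      M.trace ≠ 0 := hM ▸ Nat.cast_ne_zero.2 hk.ne'
  exact htrSigh ▸ commutation_conjugation_and_identification_general hσ2.ne'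
    (htr_ne ha htrA) (htr_ne hnh htrSigh) (htr_ne hc htrQ) hKba hKab
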